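/- Let D_* , D^* > 0 and let A: ℝ → ℝ be continuously differentiable with D_* ≤ A'(v) ≤ D^* for all v. Let U: ℝ → ℝ be a twice continuously differentiable, nondecreasing solution of (A(U))''(y) + (y/2) U'(y) = 0 on ℝ with limits U(y) → U_∓ as y → ∓∞, where U_- < U_+. Then for all y ∈ ℝ one has 0 < U'(y) ≤ e^{-y^2/(4 D^*)} · √(D^*/(8 D_*^2)) · (U_+ - U_-). -/

import Mathlib

open Filter Topology

/-!
Write `u = U' ≥ 0`, `a = A'(U) ∈ [D_*, D^*]` and `W = (A(U))' = a u` for the flux, so that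
`W' = -(y/2) u`. The proof compares `W` with Gaussians and estimates `W 0`.

* **Differentiability of the flux** (`flux_hasDerivAt`). As `A` is only `C¹`, the equation in terms
  of `deriv` would only say `y u(y) = 0` at a point `y` where `W` is not differentiable. If
  `u(y) = 0`, then `u` has a minimum at `y`, hence `u = o(· - y)` and also `W = a u = o(· - y)`.
  If `y = 0`, the derivative extends continuously across `0`.
* **Gaussian comparison.** The derivative of `W exp(y²/(4 D))` is
  `y · (1/2) u (a/D - 1) exp(y²/(4 D))`. With `D = D_*` or `D = D^*` the factor of `y` has a sign,
  so `W 0 exp(-y²/(4 D_*)) ≤ W y ≤ W 0 exp(-y²/(4 D^*))`. In particular `W 0 > 0`, since otherwise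
  `W` vanishes and `U` is constant.
* **Bound on `W 0`** (`flux_zero_le`). For `α > 0` and `k = α D^* + 1/(8 α)` the functions
  `±W - α y W + k U` are nondecreasing, because `α y²/2 ∓ y/2 + 1/(8 α)` is a perfect square.
  Comparing the values at `0` and at `±1/α`, where the terms containing `W` cancel, yields
  `W 0 ≤ k (U_+ - U 0)` and `W 0 ≤ k (U 0 - U_-)`. The choice `α = 1/√(8 D^*)` makes `k/2 = √(D^*/8)`.
-/

/-- The two-sided first derivative test for a minimum at `0`. -/
lemma apply_zero_le_of_hasDerivAt_mul {g h : ℝ → ℝ} (hg : ∀ y, HasDerivAt g (y * h y) y)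
    (hh : ∀ y, 0 ≤ h y) (y : ℝ) : g 0 ≤ g y := by
  have hc : Continuous g := continuous_iff_continuousAt.2 fun y => (hg y).continuousAt
  rcases le_total 0 y with hy | hy
  · refine monotoneOn_of_deriv_nonneg (convex_Ici 0) hc.continuousOn
      (fun z _ => (hg z).differentiableAt.differentiableWithinAt) ?_
      (Set.self_mem_Ici) hy hy
    intro z hz
    rw [interior_Ici] at hz
    rw [(hg z).deriv]
    exact mul_nonneg hz.le (hh z)
  · refine antitoneOn_of_deriv_nonpos (convex_Iic 0) hc.continuousOn
      (fun z _ => (hg z).differentiableAt.differentiableWithinAt) ?_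
      hy (Set.self_mem_Iic) hy
    intro z hz
    rw [interior_Iic] at hz
    rw [(hg z).deriv]
    exact mul_nonpos_of_nonpos_of_nonneg hz.le (hh z)

/-- The flux `W = a u` is differentiable everywhere, although the equation is stated through
`deriv`, whose value is `0` at points of nondifferentiability. -/
lemma flux_hasDerivAt {a u W : ℝ → ℝ} (ha : Continuous a) (hu : Differentiable ℝ u)
    (hu0 : ∀ y, 0 ≤ u y) (hW : ∀ y, W y = a y * u y)
    (hODE : ∀ y, deriv W y + (y / 2) * u y = 0) (y : ℝ) :
    HasDerivAt W (-(y / 2) * u y) y := by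
  have hWc : Continuous W := by
    rw [funext hW]
    exact ha.mul hu.continuous
  have key : ∀ y, y ≠ 0 ∨ u y = 0 → HasDerivAt W (-(y / 2) * u y) y := by
    intro y hy
    by_cases hd : DifferentiableAt ℝ W y
    · have := hd.hasDerivAt
      rwa [show deriv W y = -(y / 2) * u y by linarith [hODE y]] at this
    · have huy : u y = 0 := by
        have h := hODE y
        rw [deriv_zero_of_not_differentiableAt hd] at h
        rcases hy with hy | hy
        · have : y * u y = 0 := by linarith
          exact (mul_eq_zero.1 this).resolve_left hy
        · exact hy
      -- `u` is minimal at `y`, so its derivative vanishes there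
      have hmin : IsLocalMin u y := Eventually.of_forall fun z => by rw [huy]; exact hu0 z
      have h1 : HasDerivAt u 0 y := by
        have := (hu y).hasDerivAt
        rwa [hmin.deriv_eq_zero] at this
      have h2 : (fun z => u z) =o[𝓝 y] fun z => z - y := by
        have := hasDerivAt_iff_isLittleO.1 h1
        simpa [huy] using this
      have h3 : a =O[𝓝 y] fun _ => (1 : ℝ) := ha.continuousAt.isBigO_one ℝ
      have h4 := h3.mul_isLittleO h2
      rw [hasDerivAt_iff_isLittleO]
      simpa [hW, huy] using h4
  rcases eq_or_ne y 0 with rfl | hy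
  · refine hasDerivAt_of_hasDerivAt_of_ne (g := fun y => -(y / 2) * u y)
      (fun y hy => key y (Or.inl hy)) hWc.continuousAt ?_
    have := hu.continuous
    fun_prop
  · exact key y (Or.inl hy)

/-- The bound `W 0 ≤ √(D^*/8) (U_+ - U_-)`. -/
lemma flux_zero_le {D Um Up : ℝ} (hD : 0 < D) {U a u W : ℝ → ℝ}
    (hUd : ∀ y, HasDerivAt U (u y) y) (hu0 : ∀ y, 0 ≤ u y) (haD : ∀ y, a y ≤ D)
    (hW : ∀ y, W y = a y * u y) (hWd : ∀ y, HasDerivAt W (-(y / 2) * u y) y)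
    (hm : ∀ y, Um ≤ U y) (hp : ∀ y, U y ≤ Up) :
    W 0 ≤ Real.sqrt (D / 8) * (Up - Um) := by
  set s := Real.sqrt (D / 8) with hs
  have hs0 : 0 < s := Real.sqrt_pos.2 (by positivity)
  have hs2 : 8 * s ^ 2 = D := by
    rw [hs, Real.sq_sqrt (by positivity)]; ring
  -- `α = 1/(8 s)` and `k = 2 s`; everything is multiplied by `8 s`; `e = 1` and `e = -1` treat
  -- the right and the left half-line
  have mono : ∀ e : ℝ, e ^ 2 = 1 →
      Monotone fun y => 8 * s * e * W y - y * W y + 16 * s ^ 2 * U y := by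
    intro e he
    have hd : ∀ y, HasDerivAt (fun y => 8 * s * e * W y - y * W y + 16 * s ^ 2 * U y)
        (8 * s * e * (-(y / 2) * u y) - (1 * W y + y * (-(y / 2) * u y)) + 16 * s ^ 2 * u y) y :=
      fun y => (((hWd y).const_mul _).sub ((hasDerivAt_id y).mul (hWd y))).add
        ((hUd y).const_mul _)
    refine monotone_of_deriv_nonneg (fun y => (hd y).differentiableAt) fun y => ?_
    rw [(hd y).deriv, hW]
    have h1 : 0 ≤ u y * (D - a y) := mul_nonneg (hu0 y) (by linarith [haD y])
    have h2 : 0 ≤ u y * ((y - 4 * s * e) ^ 2 / 2) := mul_nonneg (hu0 y) (by positivity)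
    have h3 : u y * ((y - 4 * s * e) ^ 2 / 2) =
        u y * (y ^ 2 / 2 - 4 * s * e * y + 8 * s ^ 2 * e ^ 2) := by ring
    rw [h3, he] at h2
    rw [← hs2] at h1
    linarith
  -- at `y = ± 8 s` the terms containing `W` cancel
  have hr := mono 1 (by norm_num) (show (0 : ℝ) ≤ 8 * s by positivity)
  have hl := mono (-1) (by norm_num) (show -(8 * s) ≤ (0 : ℝ) by linarith)
  simp only at hr hl
  have e1 : 16 * s ^ 2 * U (8 * s) ≤ 16 * s ^ 2 * Up :=
    mul_le_mul_of_nonneg_left (hp _) (by positivity)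
  have e2 : 16 * s ^ 2 * Um ≤ 16 * s ^ 2 * U (-(8 * s)) :=
    mul_le_mul_of_nonneg_left (hm _) (by positivity)
  have h : 16 * s * W 0 ≤ 16 * s * (s * (Up - Um)) := by linarith
  exact le_of_mul_le_mul_left h (by positivity)

/-- Gaussian-type decay estimate for the derivative of a monotone similarity
profile `U` solving `(A(U))'' + (y/2) U' = 0` with `U(∓∞) = U_∓`, `U_- < U_+`,
where `D_* ≤ A' ≤ D^*`. -/
theorem similarity_profile_derivative_estimate
    (Dlow Dhigh : ℝ) (hDlow : 0 < Dlow) (hDhigh : 0 < Dhigh)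
    (A : ℝ → ℝ) (hA : ContDiff ℝ 1 A)
    (hA' : ∀ v : ℝ, Dlow ≤ deriv A v ∧ deriv A v ≤ Dhigh)
    (Um Up : ℝ) (hU : Um < Up)
    (U : ℝ → ℝ) (hUsmooth : ContDiff ℝ 2 U) (hUmono : Monotone U)
    (hODE : ∀ y : ℝ,
      deriv (deriv (fun z : ℝ => A (U z))) y + (y / 2) * deriv U y = 0)
    (hlimm : Tendsto U atBot (𝓝 Um)) (hlimp : Tendsto U atTop (𝓝 Up)) :
    ∀ y : ℝ, 0 < deriv U y ∧
      deriv U y ≤ Real.exp (-y ^ 2 / (4 * Dhigh)) *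
        Real.sqrt (Dhigh / (8 * Dlow ^ 2)) * (Up - Um) := by
  have hUd : Differentiable ℝ U := hUsmooth.differentiable (by norm_num)
  have hAd : Differentiable ℝ A := hA.differentiable (by norm_num)
  have hudiff : Differentiable ℝ (deriv U) := by
    have : ContDiff ℝ (1 + 1) U := by simpa [one_add_one_eq_two] using hUsmooth
    exact (contDiff_succ_iff_deriv.1 this).2.2.differentiable (by norm_num)
  have hu0 : ∀ y, 0 ≤ deriv U y := fun y => hUmono.deriv_nonneg
  have hac : Continuous fun y => deriv A (U y) :=
    (hA.continuous_deriv (by norm_num)).comp hUd.continuous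
  have hW : ∀ y, deriv (fun z : ℝ => A (U z)) y = deriv A (U y) * deriv U y := fun y =>
    ((hAd (U y)).hasDerivAt.comp y (hUd y).hasDerivAt).deriv
  have hWd := flux_hasDerivAt hac hudiff hu0 hW hODE
  generalize deriv (fun z : ℝ => A (U z)) = W at hW hWd
  have hW0 : ∀ y, 0 ≤ W y := fun y => by
    rw [hW]; exact mul_nonneg (hDlow.le.trans (hA' _).1) (hu0 y)
  have hbound := flux_zero_le hDhigh (fun y => (hUd y).hasDerivAt) hu0 (fun y => (hA' (U y)).2)
    hW hWd (fun y => hUmono.le_of_tendsto hlimm y) (fun y => hUmono.ge_of_tendsto hlimp y)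
  have hgauss : ∀ D : ℝ, 0 < D → ∀ y, HasDerivAt (fun y => W y * Real.exp (y ^ 2 / (4 * D)))
      (y * (1 / 2 * deriv U y * (deriv A (U y) / D - 1) * Real.exp (y ^ 2 / (4 * D)))) y := by
    intro D hD y
    have h1 : HasDerivAt (fun y : ℝ => Real.exp (y ^ 2 / (4 * D)))
        (Real.exp (y ^ 2 / (4 * D)) * (2 * y / (4 * D))) y := by
      have := ((hasDerivAt_pow 2 y).div_const (4 * D)).exp
      simpa using this
    refine ((hWd y).mul h1).congr_deriv ?_
    rw [hW]
    field_simp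
    ring
  have hlow : ∀ y, W 0 ≤ W y * Real.exp (y ^ 2 / (4 * Dlow)) := fun y => by
    have := apply_zero_le_of_hasDerivAt_mul (hgauss Dlow hDlow) (fun y => by
      have : 0 ≤ deriv A (U y) / Dlow - 1 := by
        rw [sub_nonneg, one_le_div hDlow]; exact (hA' _).1
      have := hu0 y
      positivity) y
    simpa using this
  have hhigh : ∀ y, W y * Real.exp (y ^ 2 / (4 * Dhigh)) ≤ W 0 := fun y => by
    have := apply_zero_le_of_hasDerivAt_mul
      (h := fun y => 1 / 2 * deriv U y * (1 - deriv A (U y) / Dhigh) *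
        Real.exp (y ^ 2 / (4 * Dhigh)))
      (fun y => (hgauss Dhigh hDhigh y).neg.congr_deriv (by ring)) (fun y => by
      have : 0 ≤ 1 - deriv A (U y) / Dhigh := by
        rw [sub_nonneg, div_le_one hDhigh]; exact (hA' _).2
      have := hu0 y
      positivity) y
    simpa using this
  have hWpos0 : 0 < W 0 := by
    refine (hW0 0).lt_of_ne' fun h0 => ?_
    have hu : ∀ y, deriv U y = 0 := fun y => by
      have h1 := hhigh y
      rw [h0] at h1
      have h2 : W y = 0 := le_antisymm (nonpos_of_mul_nonpos_left h1 (Real.exp_pos _)) (hW0 y)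
      rw [hW] at h2
      exact (mul_eq_zero.1 h2).resolve_left (hDlow.trans_le (hA' _).1).ne'
    have hconst : U = fun _ => U 0 := funext fun y => is_const_of_deriv_eq_zero hUd hu y 0
    rw [hconst] at hlimm hlimp
    exact hU.ne ((tendsto_nhds_unique hlimm tendsto_const_nhds).trans
      (tendsto_nhds_unique tendsto_const_nhds hlimp))
  intro y
  constructor
  · have h1 : 0 < W y := pos_of_mul_pos_left (hWpos0.trans_le (hlow y)) (Real.exp_pos _).le
    rw [hW] at h1
    exact pos_of_mul_pos_right h1 (hDlow.le.trans (hA' _).1)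
  · have hsq : Real.sqrt (Dhigh / (8 * Dlow ^ 2)) = Real.sqrt (Dhigh / 8) / Dlow := by
      rw [← div_div, Real.sqrt_div (by positivity), Real.sqrt_sq hDlow.le]
    have h1 : Dlow * deriv U y ≤ W y := by
      rw [hW]; exact mul_le_mul_of_nonneg_right (hA' _).1 (hu0 y)
    have h2 : W y ≤ Real.exp (-y ^ 2 / (4 * Dhigh)) * (Real.sqrt (Dhigh / 8) * (Up - Um)) := by
      rw [neg_div, Real.exp_neg, ← div_eq_inv_mul, le_div_iff₀ (Real.exp_pos _)]
      exact (hhigh y).trans hbound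
    rw [hsq, show ∀ E s d : ℝ, E * (s / Dlow) * d = E * (s * d) / Dlow from
      fun E s d => by ring, le_div_iff₀ hDlow]
    linarith
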